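/- (Entropy stability of the EC flux with positive semi-definite dissipation.) Let D be a symmetric positive semi-definite 5×5 real matrix and let L, R be any two states with bottom values b_L, b_R. Then the dissipative flux F̂ := F̃₁(L,R) − ½·D·[V] satisfies [V]·F̂ − [ψ₁] + [Φ]⟨hBx⟩ − g[h·b·vx] + g[h·vx]⟨b⟩ = −½·[V]ᵀD[V] ≤ 0. -/

import Mathlib

open scoped BigOperators
noncomputable section
open Matrix

/-- A state of the 1D (x-split) shallow water MHD system together with
the bottom topography value `b`. -/
structure SWState where
  h : ℝ
  vx : ℝ
  vy : ℝ
  Bx : ℝ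
  By : ℝ
  b : ℝ

namespace SWMHD

/-- Mean `⟨a⟩ = (a_L + a_R)/2` of an expression in the state variables. -/
def amean (f : SWState → ℝ) (L R : SWState) : ℝ := (f L + f R) / 2

/-- Jump `[a] = a_R − a_L` of an expression in the state variables. -/
def ajump (f : SWState → ℝ) (L R : SWState) : ℝ := f R - f L

/-- Entropy variables `V`. -/
def entropyVars (g : ℝ) (U : SWState) : Fin 5 → ℝ :=
  ![g * (U.h + U.b) - (U.vx ^ 2 + U.vy ^ 2 + U.Bx ^ 2 + U.By ^ 2) / 2,
    U.vx, U.vy, U.Bx, U.By]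

/-- Jump of the entropy variables. -/
def vjump (g : ℝ) (L R : SWState) : Fin 5 → ℝ :=
  fun k => entropyVars g R k - entropyVars g L k

/-- Entropy potential `ψ₁ = ½ g h² vx`. -/
def psi1 (g : ℝ) (U : SWState) : ℝ := g * U.h ^ 2 * U.vx / 2

/-- `Φ = vx Bx + vy By`. -/
def Phi (U : SWState) : ℝ := U.vx * U.Bx + U.vy * U.By

/-- The physical flux `F₁` of the x-split system. -/
def physFlux (g : ℝ) (U : SWState) : Fin 5 → ℝ :=
  ![U.h * U.vx,
    U.h * U.vx ^ 2 - U.h * U.Bx ^ 2 + g * U.h ^ 2 / 2,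
    U.h * U.vx * U.vy - U.h * U.Bx * U.By,
    0,
    U.h * (U.vx * U.By - U.Bx * U.vy)]

/-- The physical entropy flux `q₁`. -/
def q1 (g : ℝ) (U : SWState) : ℝ :=
  ((U.vx ^ 2 + U.vy ^ 2 + U.Bx ^ 2 + U.By ^ 2) / 2 + g * U.h + g * U.b) * U.h * U.vx
    - U.h * U.Bx * (U.vx * U.Bx + U.vy * U.By)

/-- The entropy conservative (EC) two-point flux `F̃₁(L,R)`. -/
def ecFlux (g : ℝ) (L R : SWState) : Fin 5 → ℝ :=
  ![amean (fun U => U.h) L R * amean (fun U => U.vx) L R,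
    amean (fun U => U.h) L R * (amean (fun U => U.vx) L R) ^ 2
      + g / 2 * amean (fun U => U.h ^ 2) L R
      - amean (fun U => U.h * U.Bx) L R * amean (fun U => U.Bx) L R
      + g * (amean (fun U => U.h * U.b) L R
             - amean (fun U => U.h) L R * amean (fun U => U.b) L R),
    amean (fun U => U.h) L R * amean (fun U => U.vx) L R * amean (fun U => U.vy) L R
      - amean (fun U => U.h * U.Bx) L R * amean (fun U => U.By) L R,
    amean (fun U => U.h) L R * amean (fun U => U.vx) L R * amean (fun U => U.Bx) L R
      - amean (fun U => U.h * U.Bx) L R * amean (fun U => U.vx) L R,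
    amean (fun U => U.h) L R * amean (fun U => U.vx) L R * amean (fun U => U.By) L R
      - amean (fun U => U.h * U.Bx) L R * amean (fun U => U.vy) L R]

/-- The entropy conservation condition `[V]·F = [ψ₁] − [Φ]⟨hBx⟩ + g[h b vx] − g[h vx]⟨b⟩`
for a two-point numerical flux `F`. -/
def ecCondition (g : ℝ) (F : Fin 5 → ℝ) (L R : SWState) : Prop :=
  vjump g L R ⬝ᵥ F
    = ajump (psi1 g) L R
      - ajump Phi L R * amean (fun U => U.h * U.Bx) L R
      + g * ajump (fun U => U.h * U.b * U.vx) L R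
      - g * ajump (fun U => U.h * U.vx) L R * amean (fun U => U.b) L R

/-- The numerical entropy flux `q̃` built from a two-point flux value `F`. -/
def numEntropyFlux (g : ℝ) (F : Fin 5 → ℝ) (L R : SWState) : ℝ :=
  (fun k => (entropyVars g L k + entropyVars g R k) / 2) ⬝ᵥ F
    + amean Phi L R * amean (fun U => U.h * U.Bx) L R
    - amean (psi1 g) L R
    + g * amean (fun U => U.h * U.vx) L R * amean (fun U => U.b) L R
    - g * amean (fun U => U.h * U.b * U.vx) L R

/-- Conservative variables `U = (h, h vx, h vy, h Bx, h By)`. -/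
def consVar (U : SWState) : Fin 5 → ℝ :=
  ![U.h, U.h * U.vx, U.h * U.vy, U.h * U.Bx, U.h * U.By]

/-- The source vector `Ψ = (0,0,0,vx,vy)`. -/
def PsiVec (U : SWState) : Fin 5 → ℝ := ![0, 0, 0, U.vx, U.vy]

/-- The bottom-topography source vector `G₁ = (0, g h, 0, 0, 0)`. -/
def G1Vec (g : ℝ) (U : SWState) : Fin 5 → ℝ := ![0, g * U.h, 0, 0, 0]

/-- The mathematical entropy (total energy). -/
def entropyFn (g : ℝ) (U : SWState) : ℝ :=
  U.h * (U.vx ^ 2 + U.vy ^ 2 + U.Bx ^ 2 + U.By ^ 2) / 2 + g * U.h ^ 2 / 2 + g * U.h * U.b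

end SWMHD

open SWMHD

/-!
By the discrete product rule `[f k] = ⟨f⟩[k] + [f]⟨k⟩`, all jumps in the entropy balance are
combinations of the jumps of the primitive variables. In `[V]·F̃₁` the jump of the kinetic and
magnetic energy carried by the mass flux cancels against the advective part of the other
components, and what remains is a pressure part `[ψ₁]`, a magnetic part `−[Φ]⟨hBx⟩` and a
topography part `g[h b vx] − g[h vx]⟨b⟩`. The entropy production is affine in the flux, with linear
part `F ↦ [V]·F`, so the dissipation term adds only the quadratic form of `D` at `[V]`.
-/

namespace SWMHD

theorem ajump_mul (f k : SWState → ℝ) (L R : SWState) :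
    ajump (fun U => f U * k U) L R = amean f L R * ajump k L R + ajump f L R * amean k L R := by
  simp only [ajump, amean]
  ring

theorem ajump_sq (f : SWState → ℝ) (L R : SWState) :
    ajump (fun U => f U ^ 2) L R = 2 * amean f L R * ajump f L R := by
  simp only [pow_two, ajump_mul]
  ring

theorem vjump_zero (g : ℝ) (L R : SWState) :
    vjump g L R 0 =
      g * (ajump (·.h) L R + ajump (·.b) L R)
        - (amean (·.vx) L R * ajump (·.vx) L R + amean (·.vy) L R * ajump (·.vy) L R
          + amean (·.Bx) L R * ajump (·.Bx) L R + amean (·.By) L R * ajump (·.By) L R) :=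
  calc vjump g L R 0
      = g * (ajump (·.h) L R + ajump (·.b) L R)
        - (ajump (·.vx ^ 2) L R + ajump (·.vy ^ 2) L R
          + ajump (·.Bx ^ 2) L R + ajump (·.By ^ 2) L R) / 2 := by
        simp only [vjump, entropyVars, ajump, cons_val_zero]
        ring
    _ = _ := by
        simp only [ajump_sq]
        ring

theorem vjump_eq (g : ℝ) (L R : SWState) :
    vjump g L R =
      ![g * (ajump (·.h) L R + ajump (·.b) L R)
          - (amean (·.vx) L R * ajump (·.vx) L R + amean (·.vy) L R * ajump (·.vy) L R
            + amean (·.Bx) L R * ajump (·.Bx) L R + amean (·.By) L R * ajump (·.By) L R),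
        ajump (·.vx) L R, ajump (·.vy) L R, ajump (·.Bx) L R, ajump (·.By) L R] := by
  ext k
  fin_cases k
  · exact vjump_zero g L R
  all_goals rfl

theorem ajump_psi1 (g : ℝ) (L R : SWState) :
    ajump (psi1 g) L R =
      g * (amean (·.h) L R * amean (·.vx) L R * ajump (·.h) L R
        + amean (fun U => U.h ^ 2) L R / 2 * ajump (·.vx) L R) := by
  have scale : ajump (psi1 g) L R = g / 2 * ajump (fun U => U.h ^ 2 * U.vx) L R := by
    simp only [ajump, psi1]
    ring
  rw [scale, ajump_mul, ajump_sq]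
  ring

theorem ajump_Phi (L R : SWState) :
    ajump Phi L R =
      amean (·.vx) L R * ajump (·.Bx) L R + ajump (·.vx) L R * amean (·.Bx) L R
        + (amean (·.vy) L R * ajump (·.By) L R + ajump (·.vy) L R * amean (·.By) L R) := by
  rw [← ajump_mul, ← ajump_mul]
  simp only [ajump, Phi]
  ring

theorem ajump_h_mul_b_mul_vx_sub (L R : SWState) :
    ajump (fun U => U.h * U.b * U.vx) L R - ajump (fun U => U.h * U.vx) L R * amean (·.b) L R =
      amean (·.h) L R * amean (·.vx) L R * ajump (·.b) L R
        + (amean (fun U => U.h * U.b) L R - amean (·.h) L R * amean (·.b) L R)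
          * ajump (·.vx) L R := by
  rw [ajump_mul (fun U => U.h * U.b), ajump_mul (·.h) (·.b), ajump_mul (·.h) (·.vx)]
  ring

theorem ecCondition_ecFlux (g : ℝ) (L R : SWState) : ecCondition g (ecFlux g L R) L R := by
  unfold ecCondition
  calc vjump g L R ⬝ᵥ ecFlux g L R
      = g * (amean (·.h) L R * amean (·.vx) L R * ajump (·.h) L R
            + amean (fun U => U.h ^ 2) L R / 2 * ajump (·.vx) L R)
        - (amean (·.vx) L R * ajump (·.Bx) L R + ajump (·.vx) L R * amean (·.Bx) L R
            + (amean (·.vy) L R * ajump (·.By) L R + ajump (·.vy) L R * amean (·.By) L R))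
          * amean (fun U => U.h * U.Bx) L R
        + g * (amean (·.h) L R * amean (·.vx) L R * ajump (·.b) L R
            + (amean (fun U => U.h * U.b) L R - amean (·.h) L R * amean (·.b) L R)
              * ajump (·.vx) L R) := by
        rw [vjump_eq, ecFlux]
        simp only [cons_dotProduct_cons, dotProduct_of_isEmpty]
        ring
    _ = ajump (psi1 g) L R
        - ajump Phi L R * amean (fun U => U.h * U.Bx) L R
        + g * (ajump (fun U => U.h * U.b * U.vx) L R
            - ajump (fun U => U.h * U.vx) L R * amean (·.b) L R) := by
        rw [ajump_psi1, ajump_Phi, ajump_h_mul_b_mul_vx_sub]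
    _ = _ := by ring

/-- The entropy production `[V]·F − [ψ₁] + [Φ]⟨hBx⟩ − g[h b vx] + g[h vx]⟨b⟩` of a two-point flux
value `F`: the defect in `ecCondition`, with the sign for which nonpositive means
entropy stable. -/
def entropyProduction (g : ℝ) (F : Fin 5 → ℝ) (L R : SWState) : ℝ :=
  vjump g L R ⬝ᵥ F
    - ajump (psi1 g) L R
    + ajump Phi L R * amean (fun U => U.h * U.Bx) L R
    - g * ajump (fun U => U.h * U.b * U.vx) L R
    + g * ajump (fun U => U.h * U.vx) L R * amean (fun U => U.b) L R

theorem entropyProduction_eq_zero_iff {g : ℝ} {F : Fin 5 → ℝ} {L R : SWState} :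
    entropyProduction g F L R = 0 ↔ ecCondition g F L R := by
  unfold entropyProduction ecCondition
  constructor <;> intro h <;> linarith

theorem entropyProduction_sub (g : ℝ) (F G : Fin 5 → ℝ) (L R : SWState) :
    entropyProduction g (F - G) L R = entropyProduction g F L R - vjump g L R ⬝ᵥ G := by
  simp only [entropyProduction, dotProduct_sub]
  ring

theorem ecCondition.entropyProduction_sub_smul_mulVec {g : ℝ} {F : Fin 5 → ℝ} {L R : SWState}
    (hF : ecCondition g F L R) (c : ℝ) (D : Matrix (Fin 5) (Fin 5) ℝ) :
    entropyProduction g (F - c • D *ᵥ vjump g L R) L R =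
      -c * (vjump g L R ⬝ᵥ D *ᵥ vjump g L R) := by
  rw [entropyProduction_sub, entropyProduction_eq_zero_iff.mpr hF, dotProduct_smul, smul_eq_mul]
  ring

end SWMHD

theorem es_with_psd_dissipation_general {g : ℝ} {F : Fin 5 → ℝ} {L R : SWState}
    (hF : ecCondition g F L R) {D : Matrix (Fin 5) (Fin 5) ℝ} (hD : ∀ x, 0 ≤ x ⬝ᵥ D *ᵥ x) :
    entropyProduction g (F - (1 / 2 : ℝ) • D *ᵥ vjump g L R) L R =
        -(1 / 2) * (vjump g L R ⬝ᵥ D *ᵥ vjump g L R)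
      ∧ -(1 / 2) * (vjump g L R ⬝ᵥ D *ᵥ vjump g L R) ≤ 0 :=
  ⟨hF.entropyProduction_sub_smul_mulVec (1 / 2) D,
    mul_nonpos_of_nonpos_of_nonneg (by norm_num) (hD _)⟩

/-- entropy stability of the EC flux with a symmetric positive
semi-definite dissipation matrix `D`:  the dissipative flux
`F̂ = F̃₁(L,R) − ½ D [V]` satisfies
`[V]·F̂ − [ψ₁] + [Φ]⟨hBx⟩ − g[h b vx] + g[h vx]⟨b⟩ = −½ [V]ᵀ D [V] ≤ 0`. -/
theorem es_with_psd_dissipation (g : ℝ) (D : Matrix (Fin 5) (Fin 5) ℝ)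
    (hD : D.PosSemidef) (L R : SWState) :
    (vjump g L R ⬝ᵥ (fun k => ecFlux g L R k - (1 / 2) * D.mulVec (vjump g L R) k)
        - ajump (psi1 g) L R
        + ajump Phi L R * amean (fun U => U.h * U.Bx) L R
        - g * ajump (fun U => U.h * U.b * U.vx) L R
        + g * ajump (fun U => U.h * U.vx) L R * amean (fun U => U.b) L R
      = -(1 / 2) * (vjump g L R ⬝ᵥ D.mulVec (vjump g L R)))
    ∧ -(1 / 2) * (vjump g L R ⬝ᵥ D.mulVec (vjump g L R)) ≤ 0 :=
  es_with_psd_dissipation_general (ecCondition_ecFlux g L R) hD.dotProduct_mulVec_nonneg
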